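/- arXiv:1307.4837 — 2 statements merged into one kernel-verified Lean document; each statement's English description precedes it below -/
import Mathlib

section
/- The group G(2;2) is isomorphic to ℤ × ℤ. -/
/-- The word `a_{p-1} a_{p-2} ⋯ a_0` in the free group on `Option ℤ`,
where `some k` stands for the generator `a k` and `none` stands for `ω`. -/
def omegaWord (p : ℕ) : FreeGroup (Option ℤ) :=
  ((List.range p).reverse.map (fun i => FreeGroup.of (some (i : ℤ)))).prod

/-- The relators of the group `G(p;q)`:
`ω = a_{p-1}⋯a_0`, `a_{k+q} = a_k` and `a_{k+p} = ω a_k ω⁻¹` for all `k ∈ ℤ`. -/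
def gRels (p q : ℕ) : Set (FreeGroup (Option ℤ)) :=
  {FreeGroup.of none * (omegaWord p)⁻¹} ∪
    (⋃ k : ℤ, {FreeGroup.of (some (k + (q : ℤ))) * (FreeGroup.of (some k))⁻¹}) ∪
    (⋃ k : ℤ, {FreeGroup.of (some (k + (p : ℤ))) *
      (FreeGroup.of none * FreeGroup.of (some k) * (FreeGroup.of none)⁻¹)⁻¹})

/-- The group `G(p;q)`. -/
abbrev Gpq (p q : ℕ) : Type := PresentedGroup (gRels p q)

/-!
Taking `k = 0`, the relations `a_{k+2} = a_k` and `a_{k+2} = ω a_k ω⁻¹` say that `a_0` commutes with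
`ω = a_1 a_0`, hence with `a_1`. By periodicity `a_0` and `a_1` generate `G(2;2)`, so it is a
quotient of `ℤ × ℤ`. Conversely, sending `a_k` to one or the other basis vector of `ℤ × ℤ` according
to the parity of `k` respects every relation, which gives the inverse.
-/

-- In `omegaWord` the cast `ℕ → ℤ` elaborates to a monadic lift of the whole list of indices.
theorem omegaWord_eq_prod_map (p : ℕ) :
    omegaWord p = ((List.range p).reverse.map fun i : ℕ => FreeGroup.of (some (i : ℤ))).prod := by
  simp only [omegaWord, bind_pure_comp, List.map_eq_map, List.map_map, Function.comp_def]

namespace Gpq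

open Multiplicative (ofAdd)

/-- The generator `ω` of `G(p;q)`. -/
def omega (p q : ℕ) : Gpq p q :=
  PresentedGroup.of none

/-- The generator `a_k` of `G(p;q)`. -/
def a (p q : ℕ) (k : ℤ) : Gpq p q :=
  PresentedGroup.of (some k)

section Relations

variable (p q : ℕ)

theorem omega_eq_prod :
    omega p q = ((List.range p).reverse.map fun i : ℕ => a p q i).prod := by
  have h : PresentedGroup.mk (gRels p q) (FreeGroup.of none) =
      PresentedGroup.mk (gRels p q) (omegaWord p) :=
    PresentedGroup.mk_eq_mk_of_mul_inv_mem (Or.inl (Or.inl rfl))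
  rwa [omegaWord_eq_prod_map, map_list_prod, List.map_map] at h

theorem a_periodic : Function.Periodic (a p q) q := fun k =>
  PresentedGroup.mk_eq_mk_of_mul_inv_mem (Or.inl (Or.inr (Set.mem_iUnion.2 ⟨k, rfl⟩)))

theorem a_add_eq_conj (k : ℤ) : a p q (k + p) = omega p q * a p q k * (omega p q)⁻¹ :=
  PresentedGroup.mk_eq_mk_of_mul_inv_mem (Or.inr (Set.mem_iUnion.2 ⟨k, rfl⟩))

theorem a_emod (k : ℤ) : a p q (k % q) = a p q k := by
  rw [Int.emod_def, mul_comm]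
  exact (a_periodic p q).sub_int_mul_eq (k / q)

variable {p q}

theorem commute_omega_a (h : q ∣ p) (k : ℤ) : Commute (omega p q) (a p q k) := by
  obtain ⟨m, rfl⟩ := h
  have periodic : a (q * m) q (k + (q * m : ℕ)) = a (q * m) q k := by
    rw [mul_comm q m, Nat.cast_mul]
    exact (a_periodic _ q).nat_mul m k
  rw [a_add_eq_conj] at periodic
  exact mul_inv_eq_iff_eq_mul.mp periodic

end Relations

section UniversalProperty

variable {p q : ℕ}

/-- The universal property of `G(p;q)`: the homomorphism `ω ↦ w`, `a_k ↦ b k` attached to elements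
`w`, `b k` of a group that satisfy the defining relations. -/
def lift {H : Type*} [Group H] (w : H) (b : ℤ → H)
    (prod_eq : w = ((List.range p).reverse.map fun i : ℕ => b i).prod)
    (periodic : Function.Periodic b q) (conj : ∀ k, b (k + p) = w * b k * w⁻¹) : Gpq p q →* H :=
  PresentedGroup.toGroup (f := fun x => x.elim w b) <| by
    rintro r ((rfl | hr) | hr)
    · simp [omegaWord_eq_prod_map, map_list_prod, Function.comp_def, prod_eq]
    · obtain ⟨k, rfl⟩ := Set.mem_iUnion.1 hr
      simp [periodic k]
    · obtain ⟨k, rfl⟩ := Set.mem_iUnion.1 hr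
      simp [conj k]

@[simp]
theorem lift_a {H : Type*} [Group H] (w : H) (b : ℤ → H)
    (prod_eq : w = ((List.range p).reverse.map fun i : ℕ => b i).prod)
    (periodic : Function.Periodic b q) (conj : ∀ k, b (k + p) = w * b k * w⁻¹) (k : ℤ) :
    lift w b prod_eq periodic conj (a p q k) = b k :=
  PresentedGroup.toGroup.of _

theorem hom_ext [NeZero q] {H : Type*} [Group H] {f g : Gpq p q →* H}
    (h : ∀ i < q, f (a p q i) = g (a p q i)) : f = g := by
  have agree_a (k : ℤ) : f (a p q k) = g (a p q k) := by
    have hq : (q : ℤ) ≠ 0 := mod_cast NeZero.ne q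
    obtain ⟨i, hi⟩ := Int.eq_ofNat_of_zero_le (Int.emod_nonneg k hq)
    have hlt : i < q := by
      have := Int.emod_lt_of_pos k (by lia : (0 : ℤ) < q)
      lia
    rw [← a_emod, hi]
    exact h i hlt
  have agree_omega : f (omega p q) = g (omega p q) := by
    simp only [omega_eq_prod, map_list_prod, List.map_map, Function.comp_def, agree_a]
  exact PresentedGroup.ext fun x => x.rec agree_omega agree_a

end UniversalProperty

theorem commute_a_zero_a_one : Commute (a 2 2 0) (a 2 2 1) := by
  have omega_eq : omega 2 2 = a 2 2 1 * a 2 2 0 := by simp [omega_eq_prod, List.range_succ]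
  have h : Commute (a 2 2 1 * a 2 2 0) (a 2 2 0) := omega_eq ▸ commute_omega_a dvd_rfl 0
  simpa using (h.mul_left (Commute.refl (a 2 2 0)).inv_left).symm

/-- The homomorphism `G(2;2) → ℤ × ℤ` sending `a_k` to the first basis vector for even `k` and to
the second for odd `k`. -/
def toProd : Gpq 2 2 →* Multiplicative ℤ × Multiplicative ℤ :=
  lift (ofAdd 1, ofAdd 1) (fun k => if Even k then (ofAdd 1, 1) else (1, ofAdd 1))
    (by simp [List.range_succ])
    (fun k => by simp)
    (fun k => by simp)

theorem toProd_a (k : ℤ) :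
    toProd (a 2 2 k) = if Even k then (ofAdd 1, 1) else (1, ofAdd 1) :=
  lift_a ..

/-- The homomorphism `ℤ × ℤ → G(2;2)` sending `(m, n)` to `a_0 ^ m * a_1 ^ n`. -/
def ofProd : Multiplicative ℤ × Multiplicative ℤ →* Gpq 2 2 :=
  (zpowersHom _ (a 2 2 0)).noncommCoprod (zpowersHom _ (a 2 2 1)) fun m n =>
    commute_a_zero_a_one.zpow_zpow m.toAdd n.toAdd

theorem ofProd_apply (x : Multiplicative ℤ × Multiplicative ℤ) :
    ofProd x = a 2 2 0 ^ x.1.toAdd * a 2 2 1 ^ x.2.toAdd :=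
  rfl

theorem ofProd_comp_toProd : ofProd.comp toProd = MonoidHom.id (Gpq 2 2) :=
  hom_ext fun i hi => by interval_cases i <;> simp [toProd_a, ofProd_apply]

theorem toProd_comp_ofProd : toProd.comp ofProd = MonoidHom.id _ := by
  ext x <;> simp [ofProd_apply, toProd_a, ← ofAdd_zsmul]

end Gpq

/-- The group `G(2;2)` is isomorphic to `ℤ × ℤ`. -/
theorem stmt_9 : Nonempty (Gpq 2 2 ≃* Multiplicative (ℤ × ℤ)) := by
  have e : Gpq 2 2 ≃* Multiplicative ℤ × Multiplicative ℤ :=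
    Gpq.toProd.toMulEquiv Gpq.ofProd Gpq.ofProd_comp_toProd Gpq.toProd_comp_ofProd
  exact ⟨e.trans (MulEquiv.prodMultiplicative ℤ ℤ).symm⟩
end

section
/- Let n be a positive integer. In the group G(3;2;2n), the element ω² is central, the cyclic subgroup ⟨ω²⟩ generated by ω² is isomorphic to ℤ/nℤ, and the quotient G(3;2;2n)/⟨ω²⟩ is isomorphic to the free product ℤ/3ℤ * ℤ/2ℤ; in other words, there is a central extension 0 → ℤ/nℤ → G(3;2;2n) → ℤ/3ℤ * ℤ/2ℤ → 0 in which ℤ/nℤ is generated by ω². -/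
/-- The relators of the group `G(p;q;r)`: those of `G(p;q)` together with `ω^r = e`. -/
def gRelsProj (p q r : ℕ) : Set (FreeGroup (Option ℤ)) :=
  gRels p q ∪ {(FreeGroup.of none) ^ r}

/-- The group `G(p;q;r)`, the quotient of `G(p;q)` by the relation `ω^r = e`. -/
abbrev Gpqr (p q r : ℕ) : Type := PresentedGroup (gRelsProj p q r)

/-!
If `u * p + v * q = 1`, then `a (k + 1) = ω ^ u * a k * ω ^ (-u)`, so `ω` and `a 0` generate
`G(p;q;r)` and the relation `ω = a (p - 1) ⋯ a 0` becomes `(ω ^ (-u) * a 0) ^ p = (ω ^ q) ^ v`.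
Killing the central element `ω ^ q` therefore leaves the generators `ω ^ (-u) * a 0` and `ω` with
the relations saying that their orders divide `p` and `q`, which present `ℤ/pℤ * ℤ/qℤ`. The order
of `ω` is detected by the homomorphism to `ℤ/prℤ` sending every `a k` to `1` and `ω` to `p`.
-/

section GroupTheory

variable {H : Type*} [Group H]

lemma prod_map_conj_reverse_range (g h : H) (p : ℕ) :
    ((List.range p).reverse.map fun i => g ^ i * h * (g ^ i)⁻¹).prod = g ^ p * (g⁻¹ * h) ^ p := by
  induction p with
  | zero => simp
  | succ p ih =>
    rw [List.range_succ, List.reverse_append, List.reverse_singleton, List.singleton_append,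
      List.map_cons, List.prod_cons, ih, pow_succ g, pow_succ' (g⁻¹ * h)]
    simp only [mul_assoc, inv_mul_cancel_left, mul_inv_cancel_left]

lemma mem_zpowers_ofAdd_one (m : ℕ) (x : Multiplicative (ZMod m)) :
    x ∈ Subgroup.zpowers (Multiplicative.ofAdd (1 : ZMod m)) := by
  obtain ⟨k, hk⟩ := ZMod.intCast_surjective x.toAdd
  exact ⟨k, by simp [← ofAdd_zsmul, hk]⟩

lemma orderOf_ofAdd_one (m : ℕ) : orderOf (Multiplicative.ofAdd (1 : ZMod m)) = m := by
  rw [orderOf_ofAdd_eq_addOrderOf, ZMod.addOrderOf_one]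

lemma ofAdd_one_pow_eq_one (m : ℕ) : Multiplicative.ofAdd (1 : ZMod m) ^ m = 1 := by
  simp [← ofAdd_nsmul]

lemma exists_zmod_hom_apply_ofAdd_one_eq {m : ℕ} {h : H} (hh : h ^ m = 1) :
    ∃ f : Multiplicative (ZMod m) →* H, f (Multiplicative.ofAdd 1) = h := by
  have hdvd : orderOf h ∣ orderOf (Multiplicative.ofAdd (1 : ZMod m)) := by
    rw [orderOf_ofAdd_one]
    exact orderOf_dvd_of_pow_eq_one hh
  exact ⟨_, monoidHomOfForallMemZpowers_apply_gen (mem_zpowers_ofAdd_one m) hdvd⟩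

lemma nonempty_zpowers_mulEquiv_zmod {h : H} {n : ℕ} (hn : orderOf h = n) :
    Nonempty (Subgroup.zpowers h ≃* Multiplicative (ZMod n)) := by
  rw [← hn, ← Nat.card_zpowers]
  exact ⟨(zmodCyclicMulEquiv inferInstance).symm⟩

lemma normal_zpowers_of_mem_center {z : H} (hz : z ∈ Subgroup.center H) :
    (Subgroup.zpowers z).Normal :=
  ⟨fun x hx g => by
    rwa [Subgroup.mem_center_iff.1 (Subgroup.zpowers_le.2 hz hx) g, mul_inv_cancel_right]⟩

lemma surjective_of_coprod_generators_mem_range {p q : ℕ}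
    {φ : H →* Monoid.Coprod (Multiplicative (ZMod p)) (Multiplicative (ZMod q))}
    (hl : Monoid.Coprod.inl (Multiplicative.ofAdd 1) ∈ φ.range)
    (hr : Monoid.Coprod.inr (Multiplicative.ofAdd 1) ∈ φ.range) : Function.Surjective φ := by
  rw [← MonoidHom.range_eq_top, eq_top_iff, ← Monoid.Coprod.range_inl_sup_range_inr, sup_le_iff]
  constructor <;> rintro _ ⟨x, rfl⟩ <;> obtain ⟨k, rfl⟩ := mem_zpowers_ofAdd_one _ x
  · simpa only [map_zpow] using zpow_mem hl k
  · simpa only [map_zpow] using zpow_mem hr k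

end GroupTheory

namespace Gpqr

/-- The type ascription in `omegaWord` elaborates to a coercion of the whole list to `List ℤ`; this
form casts each index instead. -/
lemma omegaWord_eq_prod_natCast (p : ℕ) :
    omegaWord p = ((List.range p).reverse.map fun i : ℕ => FreeGroup.of (some (i : ℤ))).prod := by
  simp [omegaWord, ← List.map_eq_flatMap, Function.comp_def]

/-- The generator `ω` of `G(p;q;r)`. -/
abbrev omega (p q r : ℕ) : Gpqr p q r := PresentedGroup.of none

/-- The generator `a_k` of `G(p;q;r)`. -/
abbrev a (p q r : ℕ) (k : ℤ) : Gpqr p q r := PresentedGroup.of (some k)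

section Relations

variable (p q r : ℕ)

lemma omega_eq_prod :
    omega p q r = ((List.range p).reverse.map fun i : ℕ => a p q r i).prod := by
  have h := PresentedGroup.mk_eq_mk_of_mul_inv_mem
    (show FreeGroup.of none * (omegaWord p)⁻¹ ∈ gRelsProj p q r from Or.inl (Or.inl (Or.inl rfl)))
  rwa [omegaWord_eq_prod_natCast, map_list_prod, List.map_map] at h

lemma a_periodic : Function.Periodic (a p q r) q := fun k =>
  PresentedGroup.mk_eq_mk_of_mul_inv_mem (Or.inl (Or.inl (Or.inr (Set.mem_iUnion.2 ⟨k, rfl⟩))))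

lemma a_add_mul_q (k m : ℤ) : a p q r (k + m * q) = a p q r k := by
  simpa using (a_periodic p q r).int_mul m k

lemma a_add_p (k : ℤ) : a p q r (k + p) = omega p q r * a p q r k * (omega p q r)⁻¹ :=
  PresentedGroup.mk_eq_mk_of_mul_inv_mem (Or.inl (Or.inr (Set.mem_iUnion.2 ⟨k, rfl⟩)))

lemma omega_pow_r : omega p q r ^ r = 1 :=
  PresentedGroup.one_of_mem (rels := gRelsProj p q r) (Or.inr rfl)

lemma a_add_mul_p (k m : ℤ) :
    a p q r (k + m * p) = omega p q r ^ m * a p q r k * (omega p q r ^ m)⁻¹ := by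
  induction m with
  | zero => simp
  | succ m ih =>
    rw [add_one_mul, ← add_assoc, a_add_p, ih, zpow_add_one, (Commute.zpow_self _ _).eq]
    group
  | pred m ih =>
    have h : a p q r (k + -m * p) =
        omega p q r * a p q r (k + (-m - 1) * p) * (omega p q r)⁻¹ := by
      rw [← a_add_p]
      congr 1
      ring
    rw [eq_mul_inv_iff_mul_eq, ← inv_mul_eq_iff_eq_mul, ih] at h
    rw [← h]
    group

/-- Conjugation by `ω ^ q` shifts indices by `q * p`, a multiple of their period `q`. -/
lemma commute_omega_pow_q_a (k : ℤ) : Commute (omega p q r ^ q) (a p q r k) := by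
  have hshift := a_add_mul_p p q r k q
  rw [mul_comm, a_add_mul_q, zpow_natCast] at hshift
  exact (eq_mul_inv_iff_mul_eq.1 hshift).symm

lemma omega_pow_q_mem_center : omega p q r ^ q ∈ Subgroup.center (Gpqr p q r) := by
  refine Subgroup.mem_center_iff.2 fun x => ?_
  suffices x ∈ Subgroup.centralizer {omega p q r ^ q} from
    (Subgroup.mem_centralizer_singleton_iff.1 this)
  refine PresentedGroup.generated_by _ _ (fun j => ?_) x
  rw [Subgroup.mem_centralizer_singleton_iff]
  cases j with
  | none => exact (Commute.self_pow _ _).eq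
  | some k => exact (commute_omega_pow_q_a p q r k).symm.eq

end Relations

section Lift

variable {p q r : ℕ} {H : Type*} [Group H]

/-- The universal property of `G(p;q;r)`: the homomorphism sending `ω` to `z` and `a_k` to `b k`. -/
def lift (z : H) (b : ℤ → H) (hz : z = ((List.range p).reverse.map fun i : ℕ => b i).prod)
    (hq : Function.Periodic b q) (hp : ∀ k, b (k + p) = z * b k * z⁻¹) (hr : z ^ r = 1) :
    Gpqr p q r →* H :=
  PresentedGroup.toGroup (f := fun o => o.elim z b) <| by
    rintro _ (((rfl | hs) | hs) | rfl)
    · simpa [omegaWord_eq_prod_natCast, mul_inv_eq_one, map_list_prod, Function.comp_def] using hz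
    · obtain ⟨k, rfl⟩ := Set.mem_iUnion.1 hs
      simp [hq k]
    · obtain ⟨k, rfl⟩ := Set.mem_iUnion.1 hs
      simp [hp k, mul_assoc]
    · simpa using hr

variable {z : H} {b : ℤ → H} {hz : z = ((List.range p).reverse.map fun i : ℕ => b i).prod}
  {hq : Function.Periodic b q} {hp : ∀ k, b (k + p) = z * b k * z⁻¹} {hr : z ^ r = 1}

@[simp]
lemma lift_omega : lift z b hz hq hp hr (omega p q r) = z :=
  PresentedGroup.toGroup.of _

@[simp]
lemma lift_a (k : ℤ) : lift z b hz hq hp hr (a p q r k) = b k :=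
  PresentedGroup.toGroup.of _

end Lift

section Order

variable {p q : ℕ}

lemma orderOf_pow_p_dvd_orderOf_omega {r : ℕ} {H : Type*} [Group H] {g : H}
    (hg : (g ^ p) ^ r = 1) : orderOf (g ^ p) ∣ orderOf (omega p q r) := by
  let f : Gpqr p q r →* H := lift (g ^ p) (fun _ => g) (by simp) (fun _ => rfl)
    (fun _ => by rw [(Commute.pow_self g p).eq, mul_inv_cancel_right]) hg
  have hf : f (omega p q r) = g ^ p := lift_omega
  calc orderOf (g ^ p) = orderOf (f (omega p q r)) := by rw [hf]
    _ ∣ orderOf (omega p q r) := orderOf_map_dvd f _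

lemma orderOf_omega (hp : 0 < p) (r : ℕ) : orderOf (omega p q r) = r := by
  refine Nat.dvd_antisymm (orderOf_dvd_of_pow_eq_one (omega_pow_r p q r)) ?_
  set g : Multiplicative (ZMod (p * r)) := Multiplicative.ofAdd 1
  have hg : orderOf g = p * r := orderOf_ofAdd_one _
  have hgp : orderOf (g ^ p) = r := by
    rw [orderOf_pow' g hp.ne', hg, Nat.gcd_eq_right (dvd_mul_right p r),
      Nat.mul_div_cancel_left r hp]
  calc r = orderOf (g ^ p) := hgp.symm
    _ ∣ orderOf (omega p q r) :=
      orderOf_pow_p_dvd_orderOf_omega (orderOf_dvd_iff_pow_eq_one.1 hgp.dvd)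

lemma orderOf_omega_pow_q (hp : 0 < p) (hq : 0 < q) (n : ℕ) :
    orderOf (omega p q (q * n) ^ q) = n := by
  rw [orderOf_pow' _ hq.ne', orderOf_omega hp, Nat.gcd_eq_right (dvd_mul_right q n),
    Nat.mul_div_cancel_left n hq]

end Order

section Coprime

variable {p q r : ℕ} {u v : ℤ}

lemma a_eq_conj (h : u * p + v * q = 1) (k : ℤ) :
    a p q r k = (omega p q r ^ u) ^ k * a p q r 0 * ((omega p q r ^ u) ^ k)⁻¹ := by
  have hk : k = 0 + (k * u) * p + (k * v) * q := by linear_combination -k * h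
  conv_lhs => rw [hk, a_add_mul_q, a_add_mul_p, mul_comm k u, zpow_mul]

lemma omega_zpow_inv_mul_a_zero_pow (h : u * p + v * q = 1) :
    ((omega p q r ^ u)⁻¹ * a p q r 0) ^ p = (omega p q r ^ q) ^ v := by
  have hω : omega p q r = (omega p q r ^ u) ^ p * ((omega p q r ^ u)⁻¹ * a p q r 0) ^ p := by
    have ha : (fun i : ℕ => a p q r i) =
        fun i => (omega p q r ^ u) ^ i * a p q r 0 * ((omega p q r ^ u) ^ i)⁻¹ :=
      funext fun i => (a_eq_conj h i).trans (by rw [zpow_natCast])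
    rw [← prod_map_conj_reverse_range, ← ha, ← omega_eq_prod]
  calc ((omega p q r ^ u)⁻¹ * a p q r 0) ^ p
      = ((omega p q r ^ u) ^ p)⁻¹ * omega p q r := eq_inv_mul_of_mul_eq hω.symm
    _ = omega p q r ^ (-(u * p) + 1) := by rw [zpow_add_one, zpow_neg, zpow_mul, zpow_natCast]
    _ = omega p q r ^ (q * v) := by congr 1; linear_combination -h
    _ = (omega p q r ^ q) ^ v := by rw [zpow_mul, zpow_natCast]

variable {H : Type*} [Group H]

lemma hom_ext_of_omega_of_a_zero (h : u * p + v * q = 1) {f g : Gpqr p q r →* H}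
    (hω : f (omega p q r) = g (omega p q r)) (ha : f (a p q r 0) = g (a p q r 0)) : f = g := by
  apply PresentedGroup.ext
  rintro (_ | k)
  · exact hω
  · change f (a p q r k) = g (a p q r k)
    simp only [a_eq_conj h k, map_mul, map_inv, map_zpow, hω, ha]

lemma exists_hom_of_pow_eq_one (h : u * p + v * q = 1) (hqr : q ∣ r) {x z : H} (hx : x ^ p = 1)
    (hz : z ^ q = 1) :
    ∃ f : Gpqr p q r →* H, f (omega p q r) = z ∧ f (a p q r 0) = z ^ u * x := by
  have hzup : z ^ (u * p) = z := by
    rw [eq_sub_of_add_eq h, zpow_sub, mul_comm v, zpow_mul, zpow_natCast, hz, zpow_one, one_zpow,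
      inv_one, mul_one]
  have hzuq : (z ^ u) ^ q = 1 := by
    rw [← zpow_natCast, zpow_comm, zpow_natCast, hz, one_zpow]
  have hzr : z ^ r = 1 := orderOf_dvd_iff_pow_eq_one.1 ((orderOf_dvd_of_pow_eq_one hz).trans hqr)
  refine ⟨lift z (fun k => (z ^ u) ^ k * (z ^ u * x) * ((z ^ u) ^ k)⁻¹) ?_ (fun k => ?_)
    (fun k => ?_) hzr, lift_omega, (lift_a 0).trans (by simp)⟩
  · simp_rw [zpow_natCast]
    rw [prod_map_conj_reverse_range, inv_mul_cancel_left, hx, mul_one, ← zpow_natCast, ← zpow_mul,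
      hzup]
  · simp only [zpow_add, zpow_natCast, hzuq, mul_one]
  · have hshift : (z ^ u) ^ (k + p) = z * (z ^ u) ^ k := by
      rw [add_comm, zpow_add, ← zpow_mul, hzup]
    simp only [hshift, mul_inv_rev, mul_assoc]

lemma ker_le_zpowers_omega_pow_q (h : u * p + v * q = 1)
    {φ : Gpqr p q r →* Monoid.Coprod (Multiplicative (ZMod p)) (Multiplicative (ZMod q))}
    (hω : φ (omega p q r) = Monoid.Coprod.inr (.ofAdd 1))
    (ha : φ (a p q r 0) = Monoid.Coprod.inr (.ofAdd 1) ^ u * Monoid.Coprod.inl (.ofAdd 1)) :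
    φ.ker ≤ Subgroup.zpowers (omega p q r ^ q) := by
  have := normal_zpowers_of_mem_center (omega_pow_q_mem_center p q r)
  set π := QuotientGroup.mk' (Subgroup.zpowers (omega p q r ^ q))
  have hπω : π (omega p q r) ^ q = 1 := by
    rw [← map_pow]
    exact (QuotientGroup.eq_one_iff _).2 (Subgroup.mem_zpowers _)
  have hπx : π ((omega p q r ^ u)⁻¹ * a p q r 0) ^ p = 1 := by
    rw [← map_pow, omega_zpow_inv_mul_a_zero_pow h, map_zpow, map_pow, hπω, one_zpow]
  obtain ⟨f, hf⟩ := exists_zmod_hom_apply_ofAdd_one_eq hπx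
  obtain ⟨g, hg⟩ := exists_zmod_hom_apply_ofAdd_one_eq hπω
  have hcomp : (Monoid.Coprod.lift f g).comp φ = π := by
    apply hom_ext_of_omega_of_a_zero h
    · rw [MonoidHom.comp_apply, hω, Monoid.Coprod.lift_apply_inr, hg]
    · rw [MonoidHom.comp_apply, ha, map_mul, map_zpow, Monoid.Coprod.lift_apply_inr,
        Monoid.Coprod.lift_apply_inl, hf, hg, ← map_zpow, ← map_mul, mul_inv_cancel_left]
  calc φ.ker ≤ ((Monoid.Coprod.lift f g).comp φ).ker := fun x hx => by
        rw [MonoidHom.mem_ker, MonoidHom.comp_apply, MonoidHom.mem_ker.1 hx, map_one]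
    _ = Subgroup.zpowers (omega p q r ^ q) := by rw [hcomp, QuotientGroup.ker_mk']

lemma exists_surjective_hom_coprod_ker_eq (hpq : p.Coprime q) (hqr : q ∣ r) :
    ∃ φ : Gpqr p q r →* Monoid.Coprod (Multiplicative (ZMod p)) (Multiplicative (ZMod q)),
      Function.Surjective φ ∧ φ.ker = Subgroup.zpowers (omega p q r ^ q) := by
  obtain ⟨u, v, h⟩ := hpq.isCoprime
  set x : Monoid.Coprod (Multiplicative (ZMod p)) (Multiplicative (ZMod q)) :=
    Monoid.Coprod.inl (.ofAdd 1) with hx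
  set z : Monoid.Coprod (Multiplicative (ZMod p)) (Multiplicative (ZMod q)) :=
    Monoid.Coprod.inr (.ofAdd 1) with hz
  have hxp : x ^ p = 1 := by rw [hx, ← map_pow, ofAdd_one_pow_eq_one, map_one]
  have hzq : z ^ q = 1 := by rw [hz, ← map_pow, ofAdd_one_pow_eq_one, map_one]
  obtain ⟨φ, hω, ha⟩ := exists_hom_of_pow_eq_one h hqr hxp hzq
  refine ⟨φ, surjective_of_coprod_generators_mem_range ?_ ⟨_, hω⟩,
    (ker_le_zpowers_omega_pow_q h hω ha).antisymm ?_⟩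
  · exact ⟨(omega p q r ^ u)⁻¹ * a p q r 0, by
      rw [map_mul, map_inv, map_zpow, hω, ha, inv_mul_cancel_left]⟩
  · rw [Subgroup.zpowers_le, MonoidHom.mem_ker, map_pow, hω, hzq]

end Coprime

end Gpqr

theorem stmt_18_general {p q : ℕ} (hp : 0 < p) (hq : 0 < q) (hpq : p.Coprime q) (n : ℕ) :
    Gpqr.omega p q (q * n) ^ q ∈ Subgroup.center (Gpqr p q (q * n)) ∧
    Nonempty (Subgroup.zpowers (Gpqr.omega p q (q * n) ^ q) ≃* Multiplicative (ZMod n)) ∧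
    ∃ φ : Gpqr p q (q * n) →* Monoid.Coprod (Multiplicative (ZMod p)) (Multiplicative (ZMod q)),
      Function.Surjective φ ∧ φ.ker = Subgroup.zpowers (Gpqr.omega p q (q * n) ^ q) :=
  ⟨Gpqr.omega_pow_q_mem_center p q _,
    nonempty_zpowers_mulEquiv_zmod (Gpqr.orderOf_omega_pow_q hp hq n),
    Gpqr.exists_surjective_hom_coprod_ker_eq hpq (dvd_mul_right q n)⟩

/-- In `G(3;2;2n)`, the element `ω²` is central, the cyclic subgroup generated by `ω²` is
isomorphic to `ℤ/nℤ`, and the quotient of `G(3;2;2n)` by this subgroup is isomorphic to the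
free product `ℤ/3ℤ * ℤ/2ℤ`: there is a central extension
`0 → ℤ/nℤ → G(3;2;2n) → ℤ/3ℤ * ℤ/2ℤ → 0` in which `ℤ/nℤ` is generated by `ω²`. -/
theorem stmt_18 (n : ℕ) (hn : 0 < n) :
    ((PresentedGroup.of (rels := gRelsProj 3 2 (2 * n)) none) ^ 2 ∈
        Subgroup.center (Gpqr 3 2 (2 * n))) ∧
    Nonempty ((Subgroup.zpowers ((PresentedGroup.of (rels := gRelsProj 3 2 (2 * n)) none) ^ 2))
        ≃* Multiplicative (ZMod n)) ∧
    ∃ φ : Gpqr 3 2 (2 * n) →*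
        Monoid.Coprod (Multiplicative (ZMod 3)) (Multiplicative (ZMod 2)),
      Function.Surjective φ ∧
        φ.ker = Subgroup.zpowers ((PresentedGroup.of (rels := gRelsProj 3 2 (2 * n)) none) ^ 2) :=
  stmt_18_general three_pos two_pos (by decide) n
end
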